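/- arXiv:1107.1074 — 2 statements merged into one kernel-verified Lean document; each statement's English description precedes it below -/
import Mathlib

section
/- For every fixed x, y ∈ ℤ^d with x ≠ y, one has p(t; 0, 0) - p(t; x, y) ~ γ̃_d(y - x) · t^{-(d/2+1)} as t → ∞; that is, lim_{t→∞} t^{d/2+1} (p(t; 0, 0) - p(t; x, y)) = γ̃_d(y - x). -/
open MeasureTheory Real Filter Topology Asymptotics

/-- Fourier symbol `φ(θ) = ∑_z a(z) cos⟨z,θ⟩` of the random walk on `ℤ^d`. -/
noncomputable def phiSymb (d : ℕ) (a : (Fin d → ℤ) → ℝ) (θ : Fin d → ℝ) : ℝ :=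
  ∑' z : Fin d → ℤ, a z * Real.cos (∑ i, (z i : ℝ) * θ i)

/-- Transition probability `p(t;x,y) = (2π)^{-d} ∫_{[-π,π]^d} e^{φ(θ)t} cos⟨θ,y-x⟩ dθ`. -/
noncomputable def ptrans (d : ℕ) (a : (Fin d → ℤ) → ℝ) (t : ℝ) (x y : Fin d → ℤ) : ℝ :=
  ((2 * π) ^ d)⁻¹ *
    ∫ θ in Set.Icc (fun _ : Fin d => -π) (fun _ : Fin d => π),
      Real.exp (phiSymb d a θ * t) * Real.cos (∑ i, θ i * ((y i : ℝ) - (x i : ℝ)))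

/-- Laplace transform `G_λ(x,y) = ∫_0^∞ e^{-λt} p(t;x,y) dt` (Green's function at `λ = 0`). -/
noncomputable def Glam (d : ℕ) (a : (Fin d → ℤ) → ℝ) (lam : ℝ) (x y : Fin d → ℤ) : ℝ :=
  ∫ t in Set.Ioi (0 : ℝ), Real.exp (-lam * t) * ptrans d a t x y

/-- Hessian matrix `φ''(0)`, with entries `-∑_z a(z) z_i z_j`. -/
noncomputable def hessPhi (d : ℕ) (a : (Fin d → ℤ) → ℝ) : Matrix (Fin d) (Fin d) ℝ :=
  Matrix.of fun i j => -∑' z : Fin d → ℤ, a z * (z i : ℝ) * (z j : ℝ)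

/-- `γ_d = (2π)^{-d/2} |det φ''(0)|^{-1/2}`. -/
noncomputable def gammaConst (d : ℕ) (a : (Fin d → ℤ) → ℝ) : ℝ :=
  ((2 * π) ^ ((d : ℝ) / 2))⁻¹ * (Real.sqrt |(hessPhi d a).det|)⁻¹

/-- `ρ_d(x) = (a/(2π)^d) ∫_{[-π,π]^d} (cos⟨x,θ⟩ - 1)/φ(θ) dθ` for `x ≠ 0`, and `ρ_d(0) = 1`. -/
noncomputable def rhoConst (d : ℕ) (a : (Fin d → ℤ) → ℝ) (x : Fin d → ℤ) : ℝ :=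
  if x = 0 then 1 else
    (-(a 0) / (2 * π) ^ d) *
      ∫ θ in Set.Icc (fun _ : Fin d => -π) (fun _ : Fin d => π),
        (Real.cos (∑ i, (x i : ℝ) * θ i) - 1) / phiSymb d a θ

/-- `γ̃_d(z) = (1/(2(2π)^d)) ∫_{ℝ^d} ⟨v,z⟩² e^{⟨φ''(0)v,v⟩/2} dv`. -/
noncomputable def gammaTilde (d : ℕ) (a : (Fin d → ℤ) → ℝ) (z : Fin d → ℤ) : ℝ :=
  (2 * (2 * π) ^ d)⁻¹ *
    ∫ v : Fin d → ℝ, (∑ i, v i * (z i : ℝ)) ^ 2 *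
      Real.exp ((∑ i, (hessPhi d a).mulVec v i * v i) / 2)

lemma one_sub_cos_add_le (u v : ℝ) :
    1 - Real.cos (u + v) ≤ 2 * (1 - Real.cos u) + 2 * (1 - Real.cos v) := by
  have h (w : ℝ) : 1 - Real.cos (2 * w) = 2 * Real.sin w ^ 2 := by
    rw [Real.cos_two_mul, Real.cos_sq']; ring
  obtain ⟨p, rfl⟩ : ∃ p, u = 2 * p := ⟨u / 2, by ring⟩
  obtain ⟨q, rfl⟩ : ∃ q, v = 2 * q := ⟨v / 2, by ring⟩
  rw [← mul_add, h, h, h, Real.sin_add]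
  have h1 := Real.sin_sq_add_cos_sq p
  have h2 := Real.sin_sq_add_cos_sq q
  have h3 : (Real.sin p * Real.cos q) ^ 2 ≤ Real.sin p ^ 2 := by
    rw [mul_pow]; exact mul_le_of_le_one_right (sq_nonneg _) (by nlinarith [sq_nonneg (Real.sin q)])
  have h4 : (Real.cos p * Real.sin q) ^ 2 ≤ Real.sin q ^ 2 := by
    rw [mul_pow]; exact mul_le_of_le_one_left (sq_nonneg _) (by nlinarith [sq_nonneg (Real.sin p)])
  nlinarith [sq_nonneg (Real.sin p * Real.cos q - Real.cos p * Real.sin q)]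

lemma tendsto_inv_sqrt_atTop : Tendsto (fun t : ℝ => (√t)⁻¹) atTop (𝓝[≠] 0) :=
  (tendsto_inv_atTop_nhdsGT_zero.comp Real.tendsto_sqrt_atTop).mono_right
    (nhdsWithin_mono _ fun _ hx => ne_of_gt hx)

lemma tendsto_mul_one_sub_cos (s : ℝ) :
    Tendsto (fun t : ℝ => t * (1 - Real.cos ((√t)⁻¹ * s))) atTop (𝓝 (s ^ 2 / 2)) := by
  have h0 : HasDerivAt (fun r : ℝ => Real.sin (r * (s / 2))) (s / 2) 0 := by
    simpa using ((hasDerivAt_id (0 : ℝ)).mul_const (s / 2)).sin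
  have h1 := (hasDerivAt_iff_tendsto_slope_zero.1 h0).comp tendsto_inv_sqrt_atTop
  have h2 := (h1.pow 2).const_mul 2
  rw [show s ^ 2 / 2 = 2 * (s / 2) ^ 2 by ring]
  refine h2.congr' ?_
  filter_upwards [eventually_gt_atTop 0] with t ht
  have h3 : (√t)⁻¹ * s = 2 * ((√t)⁻¹ * (s / 2)) := by ring
  simp only [Function.comp_apply, zero_add, zero_mul, Real.sin_zero, sub_zero, smul_eq_mul, inv_inv]
  rw [h3, Real.cos_two_mul, Real.cos_sq', mul_pow, Real.sq_sqrt ht.le]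
  ring

lemma mul_one_sub_cos_le {t : ℝ} (ht : 0 < t) (s : ℝ) :
    t * (1 - Real.cos ((√t)⁻¹ * s)) ≤ s ^ 2 / 2 := by
  have h := mul_le_mul_of_nonneg_left (Real.one_sub_sq_div_two_le_cos (x := (√t)⁻¹ * s)) ht.le
  have h1 : t * (1 - ((√t)⁻¹ * s) ^ 2 / 2) = t - s ^ 2 / 2 := by
    rw [mul_pow, inv_pow, Real.sq_sqrt ht.le]; field_simp
  linarith

section Symbol

variable {d : ℕ} {a : (Fin d → ℤ) → ℝ}

lemma summable_mul_cos (ha : Summable a) (θ : Fin d → ℝ) :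
    Summable fun z : Fin d → ℤ => a z * Real.cos (∑ i, (z i : ℝ) * θ i) := by
  refine ha.abs.of_norm_bounded fun z => ?_
  rw [norm_mul]
  exact mul_le_of_le_one_right (norm_nonneg _) (Real.abs_cos_le_one _)

lemma continuous_phiSymb (ha : Summable a) : Continuous (phiSymb d a) := by
  refine continuous_tsum (fun z => by fun_prop) ha.abs fun z θ => ?_
  rw [norm_mul]
  exact mul_le_of_le_one_right (norm_nonneg _) (Real.abs_cos_le_one _)

lemma hasSum_neg_phiSymb (hsum : HasSum a 0) (θ : Fin d → ℝ) :
    HasSum (fun z : Fin d → ℤ => a z * (1 - Real.cos (∑ i, (z i : ℝ) * θ i)))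
      (-phiSymb d a θ) := by
  have h := hsum.sub (summable_mul_cos hsum.summable θ).hasSum
  rw [zero_sub] at h
  exact h.congr_fun fun z => by ring

lemma mul_one_sub_cos_nonneg (hpos : ∀ z : Fin d → ℤ, z ≠ 0 → 0 ≤ a z) (θ : Fin d → ℝ)
    (z : Fin d → ℤ) : 0 ≤ a z * (1 - Real.cos (∑ i, (z i : ℝ) * θ i)) := by
  rcases eq_or_ne z 0 with rfl | hz
  · simp
  · exact mul_nonneg (hpos z hz) (sub_nonneg.2 (Real.cos_le_one _))

lemma phiSymb_nonpos (hpos : ∀ z : Fin d → ℤ, z ≠ 0 → 0 ≤ a z) (hsum : HasSum a 0)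
    (θ : Fin d → ℝ) : phiSymb d a θ ≤ 0 :=
  neg_nonneg.1 ((hasSum_neg_phiSymb hsum θ).nonneg (mul_one_sub_cos_nonneg hpos θ))

lemma exists_one_sub_cos_le_phiSymb (hpos : ∀ z : Fin d → ℤ, z ≠ 0 → 0 ≤ a z)
    (hsum : HasSum a 0) (hirr : AddSubgroup.closure {z : Fin d → ℤ | 0 < a z} = ⊤)
    (z : Fin d → ℤ) :
    ∃ C : ℝ, 0 ≤ C ∧ ∀ θ : Fin d → ℝ,
      1 - Real.cos (∑ i, (z i : ℝ) * θ i) ≤ C * -phiSymb d a θ := by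
  have hz : z ∈ AddSubgroup.closure {z : Fin d → ℤ | 0 < a z} := hirr ▸ AddSubgroup.mem_top z
  induction hz using AddSubgroup.closure_induction with
  | mem z hz =>
    have hz : 0 < a z := hz
    refine ⟨(a z)⁻¹, inv_nonneg.2 hz.le, fun θ => ?_⟩
    rw [le_inv_mul_iff₀ hz]
    exact le_hasSum (hasSum_neg_phiSymb hsum θ) z fun w _ => mul_one_sub_cos_nonneg hpos θ w
  | zero => exact ⟨0, le_rfl, fun θ => by simp⟩
  | add z w _ _ hz hw =>
    obtain ⟨C, hC, h1⟩ := hz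
    obtain ⟨D, hD, h2⟩ := hw
    refine ⟨2 * C + 2 * D, by positivity, fun θ => ?_⟩
    have h := one_sub_cos_add_le (∑ i, (z i : ℝ) * θ i) (∑ i, (w i : ℝ) * θ i)
    simp only [Pi.add_apply, Int.cast_add, add_mul, Finset.sum_add_distrib]
    linarith [h1 θ, h2 θ]
  | neg z _ hz =>
    obtain ⟨C, hC, h1⟩ := hz
    refine ⟨C, hC, fun θ => ?_⟩
    simpa [neg_mul, Finset.sum_neg_distrib] using h1 θ

/-- The symbol is bounded above by a negative definite quadratic form on the torus. -/
lemma exists_phiSymb_le (hpos : ∀ z : Fin d → ℤ, z ≠ 0 → 0 ≤ a z)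
    (hsum : HasSum a 0) (hirr : AddSubgroup.closure {z : Fin d → ℤ | 0 < a z} = ⊤) :
    ∃ c : ℝ, 0 < c ∧ ∀ θ ∈ Set.Icc (fun _ : Fin d => -π) (fun _ : Fin d => π),
      phiSymb d a θ ≤ -c * ∑ i, θ i ^ 2 := by
  choose C hC h using fun i : Fin d =>
    exists_one_sub_cos_le_phiSymb hpos hsum hirr (Pi.single i 1)
  have hS : 0 ≤ ∑ i, C i := Finset.sum_nonneg fun i _ => hC i
  refine ⟨2 / π ^ 2 / (1 + ∑ i, C i), by positivity, fun θ hθ => ?_⟩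
  have h1 : 2 / π ^ 2 * ∑ i, θ i ^ 2 ≤ (∑ i, C i) * -phiSymb d a θ := by
    rw [Finset.mul_sum, Finset.sum_mul]
    refine Finset.sum_le_sum fun i _ => ?_
    have h2 : ∑ j, ((Pi.single i 1 : Fin d → ℤ) j : ℝ) * θ j = θ i := by
      simp [Pi.single_apply]
    have h3 := h i θ
    rw [h2] at h3
    have h4 := Real.cos_le_one_sub_mul_cos_sq (abs_le.2 ⟨hθ.1 i, hθ.2 i⟩)
    linarith
  have h5 := phiSymb_nonpos hpos hsum θ
  have h6 : 2 / π ^ 2 / (1 + ∑ i, C i) * ∑ i, θ i ^ 2 ≤ -phiSymb d a θ := by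
    rw [div_mul_eq_mul_div, div_le_iff₀ (by positivity)]
    linarith
  linarith

lemma sq_sum_mul_le (z : Fin d → ℤ) (v : Fin d → ℝ) :
    (∑ i, (z i : ℝ) * v i) ^ 2 ≤ (∑ i, (z i : ℝ) ^ 2) * ∑ i, v i ^ 2 :=
  Finset.sum_mul_sq_le_sq_mul_sq _ _ _

lemma summable_sq_sum_mul_abs
    (hvar : Summable fun z : Fin d → ℤ => (∑ i, ((z i : ℝ)) ^ 2) * a z) (v : Fin d → ℝ) :
    Summable fun z : Fin d → ℤ => |a z| * ((∑ i, (z i : ℝ) * v i) ^ 2 / 2) := by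
  refine .of_nonneg_of_le (fun z => by positivity) (fun z => ?_)
    (hvar.abs.mul_right (∑ i, v i ^ 2))
  have h := sq_sum_mul_le z v
  have h0 : 0 ≤ ∑ i, (z i : ℝ) ^ 2 := by positivity
  rw [abs_mul, abs_of_nonneg h0]
  nlinarith [mul_le_mul_of_nonneg_left h (abs_nonneg (a z)),
    mul_nonneg (abs_nonneg (a z)) (sq_nonneg (∑ i, (z i : ℝ) * v i))]

lemma sum_hessPhi_mulVec_mul
    (hvar : Summable fun z : Fin d → ℤ => (∑ i, ((z i : ℝ)) ^ 2) * a z) (v : Fin d → ℝ) :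
    ∑ i, (hessPhi d a).mulVec v i * v i = -∑' z, a z * (∑ i, (z i : ℝ) * v i) ^ 2 := by
  have hs (i j : Fin d) : Summable fun z : Fin d → ℤ => a z * (z i : ℝ) * (z j : ℝ) := by
    refine hvar.abs.of_norm_bounded fun z => ?_
    have hi := Finset.single_le_sum (f := fun i => (z i : ℝ) ^ 2) (fun i _ => sq_nonneg _)
      (Finset.mem_univ i)
    have hj := Finset.single_le_sum (f := fun i => (z i : ℝ) ^ 2) (fun i _ => sq_nonneg _)
      (Finset.mem_univ j)
    have h0 : 0 ≤ ∑ i, (z i : ℝ) ^ 2 := by positivity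
    have h1 : |(z i : ℝ) * z j| ≤ ∑ i, (z i : ℝ) ^ 2 := by
      rw [abs_le]
      constructor <;> nlinarith [sq_nonneg ((z i : ℝ) + z j), sq_nonneg ((z i : ℝ) - z j)]
    rw [mul_assoc, Real.norm_eq_abs, abs_mul (a z), abs_mul _ (a z), abs_of_nonneg h0, mul_comm]
    exact mul_le_mul_of_nonneg_right h1 (abs_nonneg _)
  have h1 : HasSum (fun z : Fin d → ℤ => ∑ i, ∑ j, a z * (z i : ℝ) * (z j : ℝ) * (v j * v i))
      (∑ i, ∑ j, (∑' z : Fin d → ℤ, a z * (z i : ℝ) * (z j : ℝ)) * (v j * v i)) :=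
    hasSum_sum fun i _ => hasSum_sum fun j _ => (hs i j).hasSum.mul_right _
  have h2 : (fun z : Fin d → ℤ => a z * (∑ i, (z i : ℝ) * v i) ^ 2) =
      fun z : Fin d → ℤ => ∑ i, ∑ j, a z * (z i : ℝ) * (z j : ℝ) * (v j * v i) := by
    ext z
    rw [sq, Finset.sum_mul_sum, Finset.mul_sum]
    refine Finset.sum_congr rfl fun i _ => ?_
    rw [Finset.mul_sum]
    exact Finset.sum_congr rfl fun j _ => by ring
  rw [h2, h1.tsum_eq, ← Finset.sum_neg_distrib]
  refine Finset.sum_congr rfl fun i _ => ?_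
  rw [Matrix.mulVec, dotProduct, Finset.sum_mul, ← Finset.sum_neg_distrib]
  refine Finset.sum_congr rfl fun j _ => ?_
  rw [hessPhi, Matrix.of_apply]
  ring

lemma tendsto_phiSymb_mul (hsum : HasSum a 0)
    (hvar : Summable fun z : Fin d → ℤ => (∑ i, ((z i : ℝ)) ^ 2) * a z) (v : Fin d → ℝ) :
    Tendsto (fun t : ℝ => phiSymb d a ((√t)⁻¹ • v) * t) atTop
      (𝓝 ((∑ i, (hessPhi d a).mulVec v i * v i) / 2)) := by
  have hin (t : ℝ) (z : Fin d → ℤ) :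
      ∑ i, (z i : ℝ) * ((√t)⁻¹ • v) i = (√t)⁻¹ * ∑ i, (z i : ℝ) * v i := by
    rw [Finset.mul_sum]
    exact Finset.sum_congr rfl fun i _ => by simp only [Pi.smul_apply, smul_eq_mul]; ring
  have key : Tendsto
      (fun t : ℝ => ∑' z, a z * (t * (1 - Real.cos ((√t)⁻¹ * ∑ i, (z i : ℝ) * v i)))) atTop
      (𝓝 (∑' z, a z * ((∑ i, (z i : ℝ) * v i) ^ 2 / 2))) := by
    refine tendsto_tsum_of_dominated_convergence (summable_sq_sum_mul_abs hvar v)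
      (fun z => (tendsto_mul_one_sub_cos _).const_mul _) ?_
    filter_upwards [eventually_gt_atTop 0] with t ht z
    set s := ∑ i, (z i : ℝ) * v i
    have h0 : 0 ≤ 1 - Real.cos ((√t)⁻¹ * s) := sub_nonneg.2 (Real.cos_le_one _)
    rw [norm_mul, Real.norm_eq_abs, Real.norm_of_nonneg (by positivity)]
    exact mul_le_mul_of_nonneg_left (mul_one_sub_cos_le ht s) (abs_nonneg _)
  have hlim : (∑ i, (hessPhi d a).mulVec v i * v i) / 2 =
      -∑' z, a z * ((∑ i, (z i : ℝ) * v i) ^ 2 / 2) := by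
    simp_rw [sum_hessPhi_mulVec_mul hvar, ← mul_div_assoc, tsum_div_const, neg_div]
  rw [hlim]
  refine key.neg.congr fun t => ?_
  have h := ((hasSum_neg_phiSymb hsum ((√t)⁻¹ • v)).mul_right t).tsum_eq
  simp_rw [hin, mul_assoc, mul_comm _ t] at h
  rw [h]; ring

end Symbol

lemma integrable_exp_neg_mul_sum_sq {d : ℕ} {b : ℝ} (hb : 0 < b) :
    Integrable fun v : Fin d → ℝ => Real.exp (-b * ∑ i, v i ^ 2) := by
  simp_rw [Finset.mul_sum, Real.exp_sum]
  exact Integrable.fintype_prod fun _ => integrable_exp_neg_mul_sq hb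

lemma integrable_sum_sq_mul_exp {d : ℕ} {c : ℝ} (hc : 0 < c) :
    Integrable fun v : Fin d → ℝ => (∑ i, v i ^ 2) * Real.exp (-c * ∑ i, v i ^ 2) := by
  refine ((integrable_exp_neg_mul_sum_sq (d := d) (half_pos hc)).const_mul (2 / c)).mono'
    (by fun_prop) (.of_forall fun v => ?_)
  have hs : 0 ≤ ∑ i, v i ^ 2 := by positivity
  rw [Real.norm_of_nonneg (by positivity)]
  have h1 : ∑ i, v i ^ 2 ≤ 2 / c * Real.exp (c / 2 * ∑ i, v i ^ 2) := by
    rw [div_mul_eq_mul_div, le_div_iff₀ hc]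
    linarith [Real.add_one_le_exp (c / 2 * ∑ i, v i ^ 2)]
  calc _ ≤ 2 / c * Real.exp (c / 2 * ∑ i, v i ^ 2) * Real.exp (-c * ∑ i, v i ^ 2) :=
        mul_le_mul_of_nonneg_right h1 (Real.exp_nonneg _)
    _ = _ := by rw [mul_assoc, ← Real.exp_add]; congr 2; ring

lemma ptrans_sub_ptrans {d : ℕ} {a : (Fin d → ℤ) → ℝ} (ha : Summable a) (t : ℝ)
    (x y : Fin d → ℤ) :
    ptrans d a t 0 0 - ptrans d a t x y = ((2 * π) ^ d)⁻¹ *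
      ∫ θ in Set.Icc (fun _ : Fin d => -π) (fun _ : Fin d => π),
        Real.exp (phiSymb d a θ * t) * (1 - Real.cos (∑ i, θ i * ((y - x) i : ℤ))) := by
  have hφ := continuous_phiSymb ha
  rw [ptrans, ptrans, ← mul_sub, ← integral_sub]
  · simp [mul_sub]
  all_goals exact Continuous.integrableOn_Icc (by fun_prop)

/-- `p(t;0,0) - p(t;x,y) ~ γ̃_d(y-x) t^{-(d/2+1)}` as `t → ∞`, for `x ≠ y`. -/
theorem ptrans_diff_asymptotic
    (d : ℕ) (hd : 1 ≤ d) (a : (Fin d → ℤ) → ℝ)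
    (hpos : ∀ z : Fin d → ℤ, z ≠ 0 → 0 ≤ a z)
    (hneg : a 0 < 0)
    (hsymm : ∀ z : Fin d → ℤ, a (-z) = a z)
    (hsum : HasSum a 0)
    (hvar : Summable fun z : Fin d → ℤ => (∑ i, ((z i : ℝ)) ^ 2) * a z)
    (hirr : AddSubgroup.closure {z : Fin d → ℤ | 0 < a z} = ⊤)
    (x y : Fin d → ℤ) (hxy : x ≠ y) :
    Tendsto (fun t : ℝ => t ^ ((d : ℝ) / 2 + 1) * (ptrans d a t 0 0 - ptrans d a t x y)) atTop
      (𝓝 (gammaTilde d a (y - x))) := by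
  have ha := hsum.summable
  have hφ := continuous_phiSymb ha
  obtain ⟨c, hc, hle⟩ := exists_phiSymb_le hpos hsum hirr
  set w := y - x
  set Q := Set.Icc (fun _ : Fin d => -π) (fun _ : Fin d => π)
  have hQ : MeasurableSet Q := measurableSet_Icc
  let F (t : ℝ) (θ : Fin d → ℝ) : ℝ :=
    Real.exp (phiSymb d a θ * t) * (1 - Real.cos (∑ i, θ i * (w i : ℝ)))
  have hF (t : ℝ) : Continuous (F t) := by fun_prop
  have hin (r : ℝ) (v : Fin d → ℝ) :
      ∑ i, (r • v) i * (w i : ℝ) = r * ∑ i, v i * (w i : ℝ) := by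
    rw [Finset.mul_sum]
    exact Finset.sum_congr rfl fun i _ => by simp only [Pi.smul_apply, smul_eq_mul]; ring
  have hsq (r : ℝ) (v : Fin d → ℝ) : ∑ i, (r • v) i ^ 2 = r ^ 2 * ∑ i, v i ^ 2 := by
    rw [Finset.mul_sum]
    exact Finset.sum_congr rfl fun i _ => by simp only [Pi.smul_apply, smul_eq_mul]; ring
  have hrescale : ∀ᶠ t : ℝ in atTop,
      ((2 * π) ^ d)⁻¹ * ∫ v, t * Q.indicator (F t) ((√t)⁻¹ • v) =
        t ^ ((d : ℝ) / 2 + 1) * (ptrans d a t 0 0 - ptrans d a t x y) := by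
    filter_upwards [eventually_gt_atTop 0] with t ht
    have hr : t ^ ((d : ℝ) / 2 + 1) = t * √t ^ d := by
      rw [Real.rpow_add ht, Real.rpow_one, Real.sqrt_eq_rpow, ← Real.rpow_natCast,
        ← Real.rpow_mul ht.le, mul_comm]
      congr 2; ring
    rw [ptrans_sub_ptrans ha, integral_const_mul,
      Measure.integral_comp_smul volume (Q.indicator (F t)) (√t)⁻¹, integral_indicator hQ, hr,
      Module.finrank_fin_fun, inv_pow, inv_inv, abs_of_nonneg (by positivity), smul_eq_mul]
    ring
  refine Tendsto.congr' hrescale ?_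
  have hlim : gammaTilde d a w = ((2 * π) ^ d)⁻¹ *
      ∫ v : Fin d → ℝ, Real.exp ((∑ i, (hessPhi d a).mulVec v i * v i) / 2) *
        ((∑ i, v i * (w i : ℝ)) ^ 2 / 2) := by
    rw [gammaTilde, mul_inv, mul_comm 2⁻¹, mul_assoc, ← integral_const_mul]
    congr 2
    ext v
    ring
  rw [hlim]
  refine Tendsto.const_mul _ (tendsto_integral_filter_of_dominated_convergence
    (fun v => (∑ i, (w i : ℝ) ^ 2) * ((∑ i, v i ^ 2) * Real.exp (-c * ∑ i, v i ^ 2))) ?_ ?_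
    ((integrable_sum_sq_mul_exp hc).const_mul _) (.of_forall fun v => ?_))
  · refine .of_forall fun t => ?_
    exact ((((hF t).measurable.indicator hQ).comp
      (measurable_const_smul (√t)⁻¹)).const_mul t).aestronglyMeasurable
  · filter_upwards [eventually_gt_atTop 0] with t ht
    refine .of_forall fun v => ?_
    by_cases hv : (√t)⁻¹ • v ∈ Q
    · rw [Set.indicator_of_mem hv]
      have h1 := hle _ hv
      rw [hsq, inv_pow, Real.sq_sqrt ht.le] at h1
      have h2 : phiSymb d a ((√t)⁻¹ • v) * t ≤ -c * ∑ i, v i ^ 2 := by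
        calc _ ≤ -c * (t⁻¹ * ∑ i, v i ^ 2) * t := mul_le_mul_of_nonneg_right h1 ht.le
          _ = _ := by field_simp
      have h3 := mul_one_sub_cos_le ht (∑ i, v i * (w i : ℝ))
      have h4 : (∑ i, v i * (w i : ℝ)) ^ 2 ≤ (∑ i, (w i : ℝ) ^ 2) * ∑ i, v i ^ 2 := by
        simpa only [mul_comm] using sq_sum_mul_le w v
      have h5 : 0 ≤ 1 - Real.cos ((√t)⁻¹ * ∑ i, v i * (w i : ℝ)) :=
        sub_nonneg.2 (Real.cos_le_one _)
      simp only [F, hin]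
      rw [Real.norm_of_nonneg (by positivity), mul_left_comm, mul_comm, ← mul_assoc]
      exact mul_le_mul (by nlinarith [sq_nonneg (∑ i, v i * (w i : ℝ))])
        (Real.exp_le_exp.2 h2) (Real.exp_nonneg _) (by positivity)
    · rw [Set.indicator_of_notMem hv, mul_zero, norm_zero]
      positivity
  · have h0 : Q ∈ 𝓝 (0 : Fin d → ℝ) :=
      pi_Icc_mem_nhds (fun _ => neg_lt_zero.2 Real.pi_pos) fun _ => Real.pi_pos
    have h1 : Tendsto (fun t : ℝ => (√t)⁻¹ • v) atTop (𝓝 0) := by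
      simpa using (tendsto_inv_sqrt_atTop.mono_right nhdsWithin_le_nhds).smul_const v
    refine ((Real.continuous_exp.tendsto _).comp (tendsto_phiSymb_mul hsum hvar v)).mul
      (tendsto_mul_one_sub_cos (∑ i, v i * (w i : ℝ))) |>.congr' ?_
    filter_upwards [h1.eventually_mem h0] with t ht
    rw [Set.indicator_of_mem ht]
    simp only [F, hin, Function.comp_apply]
    ring
end

section
/- If d = 1, then for each r ∈ ℤ, r ≠ 0, one has the expansion G_λ(0, 0) - G_λ(0, r) = ρ_1(r)/a - 2√π γ̃_1(r) √λ + o(√λ) as λ → 0+. -/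
open MeasureTheory Real Filter Topology Asymptotics

/-- Fourier symbol `φ(θ) = ∑_z a(z) cos(zθ)` of the random walk on `ℤ`. -/
noncomputable def phi1 (a : ℤ → ℝ) (θ : ℝ) : ℝ :=
  ∑' z : ℤ, a z * Real.cos ((z : ℝ) * θ)

/-- Transition probability `p(t;x,y) = (2π)⁻¹ ∫_{-π}^{π} e^{φ(θ)t} cos(θ(y-x)) dθ`. -/
noncomputable def p1 (a : ℤ → ℝ) (t : ℝ) (x y : ℤ) : ℝ :=
  (2 * π)⁻¹ * ∫ θ in (-π)..π, Real.exp (phi1 a θ * t) * Real.cos (θ * ((y : ℝ) - (x : ℝ)))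

/-- Laplace transform `G_λ(x,y) = ∫_0^∞ e^{-λt} p(t;x,y) dt`. -/
noncomputable def G1 (a : ℤ → ℝ) (lam : ℝ) (x y : ℤ) : ℝ :=
  ∫ t in Set.Ioi (0 : ℝ), Real.exp (-lam * t) * p1 a t x y

/-- `φ''(0) = -∑_z a(z) z²`. -/
noncomputable def phi1'' (a : ℤ → ℝ) : ℝ := -∑' z : ℤ, a z * (z : ℝ) ^ 2

/-- `γ₁ = 1/√(2π |φ''(0)|)`. -/
noncomputable def gam1 (a : ℤ → ℝ) : ℝ := 1 / Real.sqrt (2 * π * |phi1'' a|)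

/-- `ρ₁(r) = (a/(2π)) ∫_{-π}^{π} (cos(rθ) - 1)/φ(θ) dθ` for `r ≠ 0`, and `ρ₁(0) = 1`. -/
noncomputable def rho1 (a : ℤ → ℝ) (r : ℤ) : ℝ :=
  if r = 0 then 1 else
    (-(a 0) / (2 * π)) * ∫ θ in (-π)..π, (Real.cos ((r : ℝ) * θ) - 1) / phi1 a θ

/-- `γ̃₁(r) = (r²/(4π)) ∫_ℝ v² e^{φ''(0)v²/2} dv`. -/
noncomputable def gamTilde1 (a : ℤ → ℝ) (r : ℤ) : ℝ :=
  ((r : ℝ) ^ 2 / (4 * π)) * ∫ v : ℝ, v ^ 2 * Real.exp (phi1'' a * v ^ 2 / 2)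

/-- The constant `C₁(x,y)` from Theorem 1 of the paper (with `a = -a(0)`). -/
noncomputable def C1Const (a : ℤ → ℝ) (x y : ℤ) : ℝ :=
  (rho1 a (y - x) + rho1 a x - rho1 a y) / (4 * (-(a 0)) * π * gam1 a) +
    (-(a 0)) * π * (y : ℝ) ^ 2 * gam1 a ^ 3 *
      (rho1 a (y - x) - rho1 a x - rho1 a y) / (rho1 a y) ^ 2 +
    2 * (-(a 0)) * π * (x : ℝ) * (y : ℝ) * gam1 a ^ 3 / rho1 a y

theorem one_sub_cos_mul_eq_sinc (c x : ℝ) :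
    1 - Real.cos (c * x) = x ^ 2 * (c ^ 2 / 2 * Real.sinc (c * x / 2) ^ 2) := by
  have hcos : 1 - Real.cos (c * x) = 2 * Real.sin (c * x / 2) ^ 2 := by
    rw [show c * x = 2 * (c * x / 2) by ring, Real.cos_two_mul_eq_one_sub]
    ring_nf
  rw [hcos]
  by_cases h : c * x / 2 = 0
  · have : c * x = 0 := by linarith
    rw [h, show x ^ 2 * (c ^ 2 / 2 * Real.sinc 0 ^ 2) = (c * x) ^ 2 / 2 * Real.sinc 0 ^ 2 by ring,
      this]
    simp
  · have hc : c ≠ 0 := by rintro rfl; simp at h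
    have hx : x ≠ 0 := by rintro rfl; simp at h
    rw [Real.sinc_of_ne_zero h]
    field_simp

theorem integral_sq_mul_exp_neg_mul_sq {b : ℝ} (hb : 0 < b) :
    ∫ v : ℝ, v ^ 2 * Real.exp (-b * v ^ 2) = √π / (2 * (b * √b)) := by
  have h1 : ∫ v : ℝ, v ^ 2 * Real.exp (-b * v ^ 2)
      = 2 * ∫ v in Set.Ioi (0 : ℝ), v ^ 2 * Real.exp (-b * v ^ 2) := by
    rw [← integral_comp_abs (f := fun v : ℝ => v ^ 2 * Real.exp (-b * v ^ 2))]
    simp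
  have h2 := integral_rpow_mul_exp_neg_mul_rpow (p := 2) (q := 2) (b := b)
    (by norm_num) (by norm_num) hb
  have hG : Real.Gamma (3 / 2) = √π / 2 := by
    rw [show (3 / 2 : ℝ) = 1 / 2 + 1 by norm_num, Real.Gamma_add_one (by norm_num),
      Real.Gamma_one_half_eq]
    ring
  have hb3 : b ^ (3 / 2 : ℝ) = b * √b := by
    rw [show (3 / 2 : ℝ) = 1 + 1 / 2 by norm_num, Real.rpow_add hb, Real.rpow_one,
      Real.sqrt_eq_rpow]
  norm_num [Real.rpow_neg hb.le, hG, hb3] at h2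
  rw [h1]
  simp only [neg_mul]
  rw [h2]
  have := Real.sqrt_pos.2 hb
  field_simp

theorem integral_inv_one_add_sq_mul {b : ℝ} (hb : 0 < b) :
    ∫ u : ℝ, (1 + u ^ 2 * b)⁻¹ = π / √b := by
  have h := Measure.integral_comp_mul_left (fun u : ℝ => (1 + u ^ 2)⁻¹) (√b)
  simp only [integral_univ_inv_one_add_sq, mul_pow, Real.sq_sqrt hb.le] at h
  simp only [mul_comm _ b]
  rw [h, abs_of_nonneg (by positivity), smul_eq_mul]
  ring

theorem integrable_inv_one_add_sq_mul {b : ℝ} (hb : 0 < b) :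
    Integrable fun u : ℝ => (1 + u ^ 2 * b)⁻¹ := by
  have h := integrable_inv_one_add_sq.comp_mul_left' (Real.sqrt_pos.2 hb).ne'
  simpa only [mul_pow, Real.sq_sqrt hb.le, mul_comm b] using h

/-- Laplace-type asymptotics: the kernel `s / (s² + θ² g(θ))` concentrates at the origin. -/
theorem tendsto_inv_mul_integral_concentrating {k g : ℝ → ℝ} {L : ℝ} (hL : 0 < L)
    (hk : ContinuousOn k (Set.Icc (-L) L)) (hg : ContinuousOn g (Set.Icc (-L) L))
    (hgpos : ∀ θ ∈ Set.Icc (-L) L, 0 < g θ) :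
    Tendsto (fun s : ℝ => s⁻¹ * ∫ θ in (-L)..L, k θ * (s ^ 2 / (s ^ 2 + θ ^ 2 * g θ)))
      (𝓝[>] 0) (𝓝 (k 0 * (π / √(g 0)))) := by
  have hne : (Set.Icc (-L) L).Nonempty := ⟨0, by constructor <;> linarith⟩
  obtain ⟨θ₀, hθ₀, hmin⟩ := isCompact_Icc.exists_isMinOn hne hg
  obtain ⟨M, hM⟩ := isCompact_Icc.exists_bound_of_continuousOn hk
  have hc : 0 < g θ₀ := hgpos θ₀ hθ₀
  have h0 : Set.Icc (-L) L ∈ 𝓝 (0 : ℝ) := Icc_mem_nhds (by linarith) hL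
  have hM0 : 0 ≤ M := (norm_nonneg _).trans (hM 0 (mem_of_mem_nhds h0))
  let F : ℝ → ℝ → ℝ := fun s => (Set.Ioc (-L / s) (L / s)).indicator
    fun u => k (s * u) * (1 + u ^ 2 * g (s * u))⁻¹
  have hmaps : ∀ s : ℝ, 0 < s → ∀ u ∈ Set.Ioc (-L / s) (L / s), s * u ∈ Set.Icc (-L) L := by
    intro s hs u hu
    have h1 := (div_lt_iff₀' hs).1 hu.1
    have h2 := (le_div_iff₀' hs).1 hu.2
    exact ⟨h1.le, h2⟩
  have hFint : ∀ s : ℝ, 0 < s →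
      ∫ u, F s u = s⁻¹ * ∫ θ in (-L)..L, k θ * (s ^ 2 / (s ^ 2 + θ ^ 2 * g θ)) := by
    intro s hs
    have hle : -L / s ≤ L / s := by gcongr; linarith
    rw [integral_indicator measurableSet_Ioc, ← intervalIntegral.integral_of_le hle]
    have h := intervalIntegral.integral_comp_mul_left (a := -L / s) (b := L / s)
      (fun θ => k θ * (s ^ 2 / (s ^ 2 + θ ^ 2 * g θ))) hs.ne'
    rw [mul_div_cancel₀ _ hs.ne', mul_div_cancel₀ _ hs.ne', smul_eq_mul] at h
    rw [← h]
    refine intervalIntegral.integral_congr fun u _ => ?_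
    have : s ^ 2 / (s ^ 2 + (s * u) ^ 2 * g (s * u)) = (1 + u ^ 2 * g (s * u))⁻¹ := by
      rw [show s ^ 2 + (s * u) ^ 2 * g (s * u) = s ^ 2 * (1 + u ^ 2 * g (s * u)) by ring,
        div_mul_eq_div_div, div_self (by positivity), one_div]
    simp only [this]
  have hlim : Tendsto (fun s => ∫ u, F s u) (𝓝[>] 0)
      (𝓝 (∫ u : ℝ, k 0 * (1 + u ^ 2 * g 0)⁻¹)) := by
    refine tendsto_integral_filter_of_dominated_convergence
      (fun u => M * (1 + u ^ 2 * g θ₀)⁻¹) ?_ ?_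
      ((integrable_inv_one_add_sq_mul hc).const_mul M) ?_
    · filter_upwards [self_mem_nhdsWithin] with s hs
      refine (aestronglyMeasurable_indicator_iff measurableSet_Ioc).2
        (ContinuousOn.aestronglyMeasurable ?_ measurableSet_Ioc)
      have hcomp : ContinuousOn (fun u : ℝ => s * u) (Set.Ioc (-L / s) (L / s)) := by fun_prop
      refine (hk.comp hcomp (hmaps s hs)).mul (ContinuousOn.inv₀ ?_ ?_)
      · exact continuousOn_const.add
          ((continuousOn_id.pow 2).mul (hg.comp hcomp (hmaps s hs)))
      · intro u hu
        have := hgpos _ (hmaps s hs u hu)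
        positivity
    · filter_upwards [self_mem_nhdsWithin] with s hs
      refine Eventually.of_forall fun u => ?_
      by_cases hu : u ∈ Set.Ioc (-L / s) (L / s)
      · have hmem := hmaps s hs u hu
        have hle : g θ₀ ≤ g (s * u) := hmin hmem
        have hgu : 0 < g (s * u) := hgpos _ hmem
        simp only [F, Set.indicator_of_mem hu]
        rw [norm_mul, Real.norm_of_nonneg (r := (1 + u ^ 2 * g (s * u))⁻¹) (by positivity)]
        gcongr
        exact hM _ hmem
      · simp only [F, Set.indicator_of_notMem hu, norm_zero]
        positivity
    · refine Eventually.of_forall fun u => ?_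
      have hsu : Tendsto (fun s : ℝ => s * u) (𝓝[>] 0) (𝓝 0) := by
        have : Tendsto (fun s : ℝ => s * u) (𝓝 0) (𝓝 (0 * u)) := by
          exact (continuous_mul_const u).tendsto 0
        rw [zero_mul] at this
        exact this.mono_left nhdsWithin_le_nhds
      have hkt := (hk.continuousAt h0).tendsto.comp hsu
      have hgt := (hg.continuousAt h0).tendsto.comp hsu
      have hg0 := hgpos 0 (mem_of_mem_nhds h0)
      have ht := hkt.mul ((tendsto_const_nhds.add (hgt.const_mul (u ^ 2))).inv₀
        (show (1 : ℝ) + u ^ 2 * g 0 ≠ 0 by positivity))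
      refine ht.congr' ?_
      have hnear : ∀ᶠ s in 𝓝[>] (0 : ℝ), s * u ∈ Set.Ioc (-L) L :=
        hsu.eventually (Ioc_mem_nhds (by linarith) hL)
      filter_upwards [self_mem_nhdsWithin, hnear] with s hs hsL
      have hu : u ∈ Set.Ioc (-L / s) (L / s) :=
        ⟨(div_lt_iff₀' hs).2 hsL.1, (le_div_iff₀' hs).2 hsL.2⟩
      simp only [F, Set.indicator_of_mem hu, Function.comp]
  rw [integral_const_mul, integral_inv_one_add_sq_mul (hgpos 0 (mem_of_mem_nhds h0))] at hlim
  refine hlim.congr' ?_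
  filter_upwards [self_mem_nhdsWithin] with s hs using hFint s hs

/-- The quotient `-φ(θ) / θ²`, extended continuously to `θ = 0`. -/
noncomputable def phi1Quot (a : ℤ → ℝ) (θ : ℝ) : ℝ :=
  ∑' z : ℤ, a z * ((z : ℝ) ^ 2 / 2 * Real.sinc ((z : ℝ) * θ / 2) ^ 2)

theorem phi1Quot_zero (a : ℤ → ℝ) : phi1Quot a 0 = -phi1'' a / 2 := by
  simp only [phi1Quot, phi1'', mul_zero, zero_div, Real.sinc_zero, one_pow, mul_one, neg_neg]
  rw [← tsum_div_const]
  exact tsum_congr fun z => by ring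

section Symbol

variable {a : ℤ → ℝ}

theorem sq_mul_nonneg_of_nonneg_off_zero (hpos : ∀ z : ℤ, z ≠ 0 → 0 ≤ a z) (z : ℤ) :
    0 ≤ (z : ℝ) ^ 2 * a z := by
  rcases eq_or_ne z 0 with rfl | hz
  · simp
  · exact mul_nonneg (sq_nonneg _) (hpos z hz)

theorem phi1Quot_term_nonneg (hpos : ∀ z : ℤ, z ≠ 0 → 0 ≤ a z) (θ : ℝ) (z : ℤ) :
    0 ≤ a z * ((z : ℝ) ^ 2 / 2 * Real.sinc ((z : ℝ) * θ / 2) ^ 2) := by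
  have h := mul_nonneg (sq_mul_nonneg_of_nonneg_off_zero hpos z)
    (sq_nonneg (Real.sinc ((z : ℝ) * θ / 2)))
  linarith

theorem phi1Quot_term_le (hpos : ∀ z : ℤ, z ≠ 0 → 0 ≤ a z) (z : ℤ) (θ : ℝ) :
    ‖a z * ((z : ℝ) ^ 2 / 2 * Real.sinc ((z : ℝ) * θ / 2) ^ 2)‖ ≤ (z : ℝ) ^ 2 * a z := by
  rw [Real.norm_of_nonneg (phi1Quot_term_nonneg hpos θ z)]
  have h1 : Real.sinc ((z : ℝ) * θ / 2) ^ 2 ≤ 1 := by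
    rw [sq_le_one_iff_abs_le_one]
    exact Real.abs_sinc_le_one _
  nlinarith [mul_le_mul_of_nonneg_left h1 (sq_mul_nonneg_of_nonneg_off_zero hpos z),
    sq_mul_nonneg_of_nonneg_off_zero hpos z]

theorem summable_phi1Quot_term (hpos : ∀ z : ℤ, z ≠ 0 → 0 ≤ a z)
    (hvar : Summable fun z : ℤ => (z : ℝ) ^ 2 * a z) (θ : ℝ) :
    Summable fun z : ℤ => a z * ((z : ℝ) ^ 2 / 2 * Real.sinc ((z : ℝ) * θ / 2) ^ 2) :=
  hvar.of_norm_bounded fun z => phi1Quot_term_le hpos z θ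

theorem continuous_phi1Quot (hpos : ∀ z : ℤ, z ≠ 0 → 0 ≤ a z)
    (hvar : Summable fun z : ℤ => (z : ℝ) ^ 2 * a z) : Continuous (phi1Quot a) := by
  refine continuous_tsum (fun z => ?_) hvar (phi1Quot_term_le hpos)
  have := Real.continuous_sinc.comp (show Continuous fun θ : ℝ => (z : ℝ) * θ / 2 by fun_prop)
  exact continuous_const.mul (continuous_const.mul (this.pow 2))

theorem phi1_eq_neg_sq_mul_phi1Quot (hsum : HasSum a 0) (θ : ℝ) :
    phi1 a θ = -(θ ^ 2 * phi1Quot a θ) := by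
  have hcos : Summable fun z : ℤ => a z * Real.cos ((z : ℝ) * θ) := by
    refine hsum.summable.norm.of_norm_bounded fun z => ?_
    rw [norm_mul]
    exact mul_le_of_le_one_right (norm_nonneg _) (Real.abs_cos_le_one _)
  have h : ∑' z : ℤ, (a z - a z * Real.cos ((z : ℝ) * θ)) = θ ^ 2 * phi1Quot a θ := by
    rw [phi1Quot, ← tsum_mul_left]
    refine tsum_congr fun z => ?_
    have := one_sub_cos_mul_eq_sinc (z : ℝ) θ
    linear_combination a z * this
  rw [hsum.summable.tsum_sub hcos, hsum.tsum_eq] at h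
  rw [← h, phi1]
  ring

/-- Irreducibility of the walk makes its symbol vanish only at the origin, to second order. -/
theorem phi1Quot_pos (hpos : ∀ z : ℤ, z ≠ 0 → 0 ≤ a z) (hneg : a 0 < 0)
    (hvar : Summable fun z : ℤ => (z : ℝ) ^ 2 * a z)
    (hirr : AddSubgroup.closure {z : ℤ | 0 < a z} = ⊤) {θ : ℝ} (hθ : θ ∈ Set.Icc (-π) π) :
    0 < phi1Quot a θ := by
  refine (tsum_nonneg (phi1Quot_term_nonneg hpos θ)).lt_of_ne' fun h0 => ?_
  have hzero := (hasSum_zero_iff_of_nonneg (phi1Quot_term_nonneg hpos θ)).1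
    (h0 ▸ (summable_phi1Quot_term hpos hvar θ).hasSum)
  have hz0 : ∀ z : ℤ, 0 < a z → (z : ℝ) ≠ 0 := by
    intro z hz h
    rw [Int.cast_eq_zero.1 h] at hz
    exact hneg.not_gt hz
  have hsinc : ∀ z : ℤ, 0 < a z → Real.sinc ((z : ℝ) * θ / 2) = 0 := by
    intro z hz
    have := congrFun hzero z
    simpa [hz.ne', hz0 z hz] using this
  have hle : AddSubgroup.closure {z : ℤ | 0 < a z} ≤
      (AddSubgroup.zmultiples (2 * π)).comap (zmultiplesHom ℝ θ) := by
    rw [AddSubgroup.closure_le]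
    intro z hz
    have h1 := one_sub_cos_mul_eq_sinc (z : ℝ) θ
    rw [hsinc z hz] at h1
    obtain ⟨n, hn⟩ := (Real.cos_eq_one_iff ((z : ℝ) * θ)).1 (by linarith)
    exact ⟨n, by simpa using hn⟩
  obtain ⟨n, hn⟩ : θ ∈ AddSubgroup.zmultiples (2 * π) := by
    have : (1 : ℤ) ∈ AddSubgroup.closure {z : ℤ | 0 < a z} := hirr ▸ AddSubgroup.mem_top 1
    simpa using hle this
  have hn' : (n : ℝ) * (2 * π) = θ := by simpa using hn
  have hθ0 : θ = 0 := by
    have hπ := Real.pi_pos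
    have hlt : (n : ℝ) < 1 := by nlinarith [hθ.2]
    have hgt : (-1 : ℝ) < n := by nlinarith [hθ.1]
    have hn0 : n = 0 := by
      have h1 : n < 1 := by exact_mod_cast hlt
      have h2 : -1 < n := by exact_mod_cast hgt
      omega
    rw [← hn', hn0]
    simp
  have hempty : {z : ℤ | 0 < a z} = ∅ := by
    refine Set.eq_empty_of_forall_notMem fun z hz => ?_
    have := hsinc z hz
    simp [hθ0] at this
  rw [hempty, AddSubgroup.closure_empty] at hirr
  exact bot_ne_top hirr

theorem G1_eq_integral_div {lam : ℝ} (hlam : 0 < lam) (hcont : Continuous (phi1 a))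
    (hnonpos : ∀ θ, phi1 a θ ≤ 0) (x y : ℤ) :
    G1 a lam x y =
      (2 * π)⁻¹ * ∫ θ in (-π)..π, Real.cos (θ * ((y : ℝ) - (x : ℝ))) / (lam - phi1 a θ) := by
  have hle : -π ≤ π := by linarith [Real.pi_pos]
  let f : ℝ → ℝ → ℝ := fun t θ =>
    Real.exp (-lam * t) * (Real.exp (phi1 a θ * t) * Real.cos (θ * ((y : ℝ) - (x : ℝ))))
  have hint : Integrable (Function.uncurry f)
      ((volume.restrict (Set.Ioi 0)).prod (volume.restrict (Set.Ioc (-π) π))) := by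
    have hbound : Integrable (fun p : ℝ × ℝ => Real.exp (-lam * p.1) * 1)
        ((volume.restrict (Set.Ioi 0)).prod (volume.restrict (Set.Ioc (-π) π))) :=
      Integrable.mul_prod (f := fun t : ℝ => Real.exp (-lam * t)) (g := fun _ : ℝ => (1 : ℝ))
        (integrableOn_exp_mul_Ioi (by linarith) 0) (integrable_const 1)
    refine hbound.mono' ?_ ?_
    · refine Continuous.aestronglyMeasurable ?_
      simp only [f, Function.uncurry_def]
      fun_prop
    · rw [Measure.prod_restrict]
      filter_upwards [ae_restrict_mem (measurableSet_Ioi.prod measurableSet_Ioc)] with p hp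
      have ht : (0 : ℝ) < p.1 := hp.1
      simp only [f, Function.uncurry_def, norm_mul, Real.norm_eq_abs, Real.abs_exp]
      gcongr
      refine mul_le_one₀ ?_ (abs_nonneg _) (Real.abs_cos_le_one _)
      exact Real.exp_le_one_iff.2 (mul_nonpos_of_nonpos_of_nonneg (hnonpos _) ht.le)
  calc G1 a lam x y
      = (2 * π)⁻¹ * ∫ t in Set.Ioi (0 : ℝ), ∫ θ in Set.Ioc (-π) π, f t θ := by
        rw [G1, ← integral_const_mul]
        congr 1 with t
        simp only [f, p1]
        rw [integral_const_mul, intervalIntegral.integral_of_le hle]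
        ring
    _ = (2 * π)⁻¹ * ∫ θ in Set.Ioc (-π) π, ∫ t in Set.Ioi (0 : ℝ), f t θ := by
        rw [integral_integral_swap hint]
    _ = _ := by
        rw [intervalIntegral.integral_of_le hle]
        congr 2 with θ
        have hneg : phi1 a θ - lam < 0 := by linarith [hnonpos θ]
        have hf : ∀ t, f t θ =
            Real.cos (θ * ((y : ℝ) - (x : ℝ))) * Real.exp ((phi1 a θ - lam) * t) := by
          intro t
          simp only [f]
          rw [← mul_assoc, ← Real.exp_add, mul_comm]
          ring_nf
        simp only [hf]
        rw [integral_const_mul, integral_exp_mul_Ioi hneg, mul_zero, Real.exp_zero, neg_div,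
          ← div_neg, neg_sub, mul_one_div]

end Symbol

/-- For `d = 1` and `r ≠ 0`:
`G_λ(0,0) - G_λ(0,r) = ρ₁(r)/a - 2√π γ̃₁(r) √λ + o(√λ)` as `λ → 0+`. -/
theorem Glam_diff_expansion_d1
    (a : ℤ → ℝ)
    (hpos : ∀ z : ℤ, z ≠ 0 → 0 ≤ a z)
    (hneg : a 0 < 0)
    (hsymm : ∀ z : ℤ, a (-z) = a z)
    (hsum : HasSum a 0)
    (hvar : Summable fun z : ℤ => (z : ℝ) ^ 2 * a z)
    (hirr : AddSubgroup.closure {z : ℤ | 0 < a z} = ⊤)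
    (r : ℤ) (hr : r ≠ 0) :
    (fun lam : ℝ => G1 a lam 0 0 - G1 a lam 0 r -
        (rho1 a r / (-(a 0)) - 2 * Real.sqrt π * gamTilde1 a r * Real.sqrt lam))
      =o[𝓝[>] (0 : ℝ)] fun lam : ℝ => Real.sqrt lam := by
  have hπ := Real.pi_pos
  have hle : -π ≤ π := by linarith
  have hgcont := continuous_phi1Quot hpos hvar
  have hgpos : ∀ θ ∈ Set.Icc (-π) π, 0 < phi1Quot a θ := fun θ hθ =>
    phi1Quot_pos hpos hneg hvar hirr hθ
  have hphi := phi1_eq_neg_sq_mul_phi1Quot hsum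
  have hphicont : Continuous (phi1 a) := by
    rw [funext hphi]
    fun_prop
  have hphinonpos : ∀ θ, phi1 a θ ≤ 0 := fun θ => by
    rw [hphi, neg_nonpos]
    exact mul_nonneg (sq_nonneg _) (tsum_nonneg (phi1Quot_term_nonneg hpos θ))
  have hsinccont : Continuous fun θ : ℝ => Real.sinc ((r : ℝ) * θ / 2) :=
    Real.continuous_sinc.comp (by fun_prop)
  let k : ℝ → ℝ := fun θ => (r : ℝ) ^ 2 / 2 * Real.sinc ((r : ℝ) * θ / 2) ^ 2 / phi1Quot a θ
  have hkcont : ContinuousOn k (Set.Icc (-π) π) :=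
    ContinuousOn.div (by fun_prop) hgcont.continuousOn fun θ hθ => (hgpos θ hθ).ne'
  have hkcont' : ContinuousOn k (Set.uIcc (-π) π) := by rwa [Set.uIcc_of_le hle]
  have hcos : ∀ θ ∈ Set.Icc (-π) π,
      1 - Real.cos ((r : ℝ) * θ) = θ ^ 2 * (k θ * phi1Quot a θ) := by
    intro θ hθ
    rw [one_sub_cos_mul_eq_sinc, div_mul_cancel₀ _ (hgpos θ hθ).ne']
  have hrho : rho1 a r / (-(a 0)) = (2 * π)⁻¹ * ∫ θ in (-π)..π, k θ := by
    have hI : ∫ θ in (-π)..π, (Real.cos ((r : ℝ) * θ) - 1) / phi1 a θ = ∫ θ in (-π)..π, k θ := by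
      refine intervalIntegral.integral_congr_ae ?_
      filter_upwards [Measure.ae_ne volume (0 : ℝ)] with θ hθ0 hθ
      rw [Set.uIoc_of_le hle] at hθ
      have hθ' := Set.Ioc_subset_Icc_self hθ
      have hg := hgpos θ hθ'
      rw [← neg_sub, hcos θ hθ', hphi]
      field_simp
    have ha := hneg.ne
    rw [rho1, if_neg hr, hI]
    field_simp
  have hG : ∀ s : ℝ, 0 < s → G1 a (s ^ 2) 0 0 - G1 a (s ^ 2) 0 r - rho1 a r / (-(a 0)) =
      -((2 * π)⁻¹ * ∫ θ in (-π)..π, k θ * (s ^ 2 / (s ^ 2 + θ ^ 2 * phi1Quot a θ))) := by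
    intro s hs
    have hden : ∀ θ, 0 < s ^ 2 - phi1 a θ := fun θ => by
      have := hphinonpos θ
      have := pow_pos hs 2
      linarith
    have hint : ∀ y : ℤ, IntervalIntegrable
        (fun θ : ℝ => Real.cos (θ * ((y : ℝ) - ((0 : ℤ) : ℝ))) / (s ^ 2 - phi1 a θ))
        volume (-π) π := fun y =>
      (Continuous.div (by fun_prop) (by fun_prop) fun θ => (hden θ).ne').intervalIntegrable _ _
    have hint2 : IntervalIntegrable (fun θ => k θ) volume (-π) π := hkcont'.intervalIntegrable
    rw [G1_eq_integral_div (pow_pos hs 2) hphicont hphinonpos,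
      G1_eq_integral_div (pow_pos hs 2) hphicont hphinonpos, hrho, ← mul_sub, ← mul_sub,
      ← intervalIntegral.integral_sub (hint 0) (hint r),
      ← intervalIntegral.integral_sub ((hint 0).sub (hint r)) hint2, ← mul_neg,
      ← intervalIntegral.integral_neg]
    congr 1
    refine intervalIntegral.integral_congr fun θ hθ => ?_
    rw [Set.uIcc_of_le hle] at hθ
    have h1 := hcos θ hθ
    have h2 := hden θ
    rw [hphi, sub_neg_eq_add] at h2
    simp only [hphi, sub_neg_eq_add, Int.cast_zero, sub_zero, mul_zero, Real.cos_zero]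
    rw [← sub_div, mul_comm θ (r : ℝ), h1]
    field_simp
    ring
  have hlim := (tendsto_inv_mul_integral_concentrating hπ hkcont hgcont.continuousOn hgpos).comp
    (show Tendsto Real.sqrt (𝓝[>] 0) (𝓝[>] 0) from by
      refine tendsto_nhdsWithin_iff.2 ⟨?_, ?_⟩
      · have := Real.continuous_sqrt.tendsto 0
        rw [Real.sqrt_zero] at this
        exact this.mono_left nhdsWithin_le_nhds
      · filter_upwards [self_mem_nhdsWithin] with x hx using Real.sqrt_pos.2 hx)
  have hconst : 2 * √π * gamTilde1 a r = (2 * π)⁻¹ * (k 0 * (π / √(phi1Quot a 0))) := by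
    have hg0 := hgpos 0 ⟨by linarith, hπ.le⟩
    have hb : phi1'' a = -(2 * phi1Quot a 0) := by rw [phi1Quot_zero]; ring
    have hI : ∫ v : ℝ, v ^ 2 * Real.exp (phi1'' a * v ^ 2 / 2) =
        √π / (2 * (phi1Quot a 0 * √(phi1Quot a 0))) := by
      rw [← integral_sq_mul_exp_neg_mul_sq hg0, hb]
      congr 1 with v
      ring_nf
    have hs := Real.sqrt_pos.2 hg0
    simp only [k, mul_zero, zero_div, Real.sinc_zero, one_pow, mul_one]
    rw [gamTilde1, hI]
    field_simp
    rw [Real.sq_sqrt hπ.le]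
    ring
  rw [isLittleO_iff_tendsto' (by
    filter_upwards [self_mem_nhdsWithin] with lam hlam h0
    exact absurd h0 (Real.sqrt_pos.2 hlam).ne')]
  have hlim' := ((hlim.const_mul (2 * π)⁻¹).const_sub
    (2 * √π * gamTilde1 a r))
  rw [hconst, sub_self, ← hconst] at hlim'
  refine hlim'.congr' ?_
  filter_upwards [self_mem_nhdsWithin] with lam hlam
  have hs : 0 < √lam := Real.sqrt_pos.2 hlam
  have h := hG (√lam) hs
  rw [Real.sq_sqrt (le_of_lt hlam)] at h
  rw [← sub_add, h, eq_div_iff hs.ne', Function.comp_apply, Real.sq_sqrt (le_of_lt hlam)]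
  generalize (∫ θ in (-π)..π, k θ * (lam / (lam + θ ^ 2 * phi1Quot a θ))) = J
  field_simp
  ring
end
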